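/- Let M ≥ 1 and let H : [0,1] → [0,1] be an M-quasisymmetric increasing homeomorphism with H(0) = 0 and H(1) = 1. For n ≥ 1 set χ_n = max{(M/(M+1))^n − 1/2^n, 1/2^n − (1/(M+1))^n}. Then for every integer n ≥ 2, max_{0 ≤ i ≤ 2^n} |H(i/2^n) − i/2^n| ≤ max_{0 ≤ i ≤ 2^{n−1}} |H(i/2^{n−1}) − i/2^{n−1}| + χ_n. -/

import Mathlib

/-- `H` is an `M`-quasisymmetric map on `[0,1]`: for all `x` and `t > 0` with
`x - t, x + t ∈ [0,1]`, `M⁻¹ ≤ (H(x+t) - H(x))/(H(x) - H(x-t)) ≤ M`. -/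
def IsQSOn (M : ℝ) (H : ℝ → ℝ) : Prop :=
  ∀ x t : ℝ, 0 < t → x - t ∈ Set.Icc (0:ℝ) 1 → x + t ∈ Set.Icc (0:ℝ) 1 →
    M⁻¹ ≤ (H (x + t) - H x) / (H x - H (x - t)) ∧
      (H (x + t) - H x) / (H x - H (x - t)) ≤ M

/-!
Quasisymmetry, applied at the midpoint of an interval, says that the increments of `H` over the two
halves differ by a factor of at most `M`, so each of them is between `1 / (M + 1)` and `M / (M + 1)`
times the increment over the whole. By induction every dyadic increment of level `n` lies between
`(1 / (M + 1)) ^ n` and `(M / (M + 1)) ^ n`, hence differs from `1 / 2 ^ n` by at most `χ n`. A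
dyadic point of level `n + 1` is either of level `n` or the right neighbour of such a point, at
distance `1 / 2 ^ (n + 1)`, so passing to it changes the deviation by at most `χ (n + 1)`.
-/

open Set

/-- The increment of `H` over the `k`-th dyadic interval `[k / 2 ^ n, (k + 1) / 2 ^ n]` of level
`n`, counted from `k = 0`. -/
noncomputable def dyadicIncrement (H : ℝ → ℝ) (n k : ℕ) : ℝ :=
  H (((k + 1 : ℕ) : ℝ) / 2 ^ n) - H ((k : ℝ) / 2 ^ n)

theorem two_mul_div_two_pow_succ (n k : ℕ) :
    ((2 * k : ℕ) : ℝ) / 2 ^ (n + 1) = (k : ℝ) / 2 ^ n := by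
  rw [pow_succ', Nat.cast_mul, Nat.cast_ofNat, mul_div_mul_left _ _ two_ne_zero]

theorem dyadicIncrement_succ_add (H : ℝ → ℝ) (n k : ℕ) :
    dyadicIncrement H (n + 1) (2 * k) + dyadicIncrement H (n + 1) (2 * k + 1) =
      dyadicIncrement H n k := by
  simp only [dyadicIncrement, show 2 * k + 1 + 1 = 2 * (k + 1) by ring, two_mul_div_two_pow_succ]
  ring

/-- The maximal deviation of `H` from the identity over the `2 ^ n + 1` dyadic points of level `n`
in `[0, 1]`. -/
noncomputable def dyadicDeviation (H : ℝ → ℝ) (n : ℕ) : ℝ :=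
  (Finset.range (2 ^ n + 1)).sup' (Finset.nonempty_range_iff.mpr (Nat.succ_ne_zero _))
    (fun i => |H ((i : ℝ) / 2 ^ n) - (i : ℝ) / 2 ^ n|)

theorem abs_sub_le_dyadicDeviation (H : ℝ → ℝ) {n i : ℕ} (hi : i ≤ 2 ^ n) :
    |H ((i : ℝ) / 2 ^ n) - (i : ℝ) / 2 ^ n| ≤ dyadicDeviation H n :=
  Finset.le_sup' (fun i : ℕ => |H ((i : ℝ) / 2 ^ n) - (i : ℝ) / 2 ^ n|)
    (Finset.mem_range_succ_iff.mpr hi)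

theorem dyadicDeviation_succ_le {H : ℝ → ℝ} {n : ℕ} {c : ℝ}
    (hc : ∀ k < 2 ^ (n + 1), |dyadicIncrement H (n + 1) k - 1 / 2 ^ (n + 1)| ≤ c) :
    dyadicDeviation H (n + 1) ≤ dyadicDeviation H n + c := by
  refine Finset.sup'_le _ _ fun i hi => ?_
  have hi' : i ≤ 2 * 2 ^ n := by simpa [pow_succ'] using Finset.mem_range_succ_iff.mp hi
  obtain ⟨j, hij⟩ := i.even_or_odd'
  have hj := abs_sub_le_dyadicDeviation H (show j ≤ 2 ^ n by lia)
  rcases hij with rfl | rfl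
  · have hc0 : 0 ≤ c := (abs_nonneg _).trans (hc 0 (by positivity))
    rw [two_mul_div_two_pow_succ]
    linarith
  · have hsplit : H (((2 * j + 1 : ℕ) : ℝ) / 2 ^ (n + 1)) - ((2 * j + 1 : ℕ) : ℝ) / 2 ^ (n + 1) =
        (H ((j : ℝ) / 2 ^ n) - (j : ℝ) / 2 ^ n) +
          (dyadicIncrement H (n + 1) (2 * j) - 1 / 2 ^ (n + 1)) := by
      rw [dyadicIncrement, two_mul_div_two_pow_succ, Nat.cast_succ (2 * j), add_div,
        two_mul_div_two_pow_succ]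
      ring
    rw [hsplit]
    exact (abs_add_le _ _).trans (add_le_add hj (hc _ (by rw [pow_succ']; lia)))

theorem mem_Icc_of_le_mul_of_le_mul {M u v : ℝ} (hM : 0 < M + 1) (hvu : v ≤ M * u)
    (huv : u ≤ M * v) : u ∈ Icc (1 / (M + 1) * (u + v)) (M / (M + 1) * (u + v)) := by
  rw [mem_Icc, div_mul_eq_mul_div, div_mul_eq_mul_div, div_le_iff₀ hM, le_div_iff₀ hM]
  constructor <;> linarith

section

variable {M : ℝ} {H : ℝ → ℝ}

theorem IsQSOn.sub_midpoint_le_mul (hqs : IsQSOn M H) (hM : 0 < M) {a b : ℝ}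
    (ha : 0 ≤ a) (hab : a < b) (hb : b ≤ 1) (hH : H a < H b) :
    H b - H ((a + b) / 2) ≤ M * (H ((a + b) / 2) - H a) ∧
      H ((a + b) / 2) - H a ≤ M * (H b - H ((a + b) / 2)) := by
  have hleft : (a + b) / 2 - (b - a) / 2 = a := by ring
  have hright : (a + b) / 2 + (b - a) / 2 = b := by ring
  have hratio := hqs ((a + b) / 2) ((b - a) / 2) (by linarith)
    (by rw [hleft]; exact ⟨ha, by linarith⟩) (by rw [hright]; exact ⟨by linarith, hb⟩)
  rw [hleft, hright] at hratio
  obtain ⟨hlower, hupper⟩ := hratio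
  -- The two increments have the same sign since their ratio is positive, and their sum is positive.
  have hpos : 0 < H ((a + b) / 2) - H a := by
    rcases div_pos_iff.mp ((inv_pos.mpr hM).trans_le hlower) with ⟨-, h⟩ | ⟨_, _⟩
    · exact h
    · linarith
  rw [le_div_iff₀ hpos, inv_mul_le_iff₀ hM] at hlower
  exact ⟨(div_le_iff₀ hpos).mp hupper, hlower⟩

theorem IsQSOn.dyadicIncrement_succ_le_mul (hqs : IsQSOn M H) (hM : 0 < M)
    {n k : ℕ} (hk : k < 2 ^ n) (hpos : 0 < dyadicIncrement H n k) :
    dyadicIncrement H (n + 1) (2 * k + 1) ≤ M * dyadicIncrement H (n + 1) (2 * k) ∧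
      dyadicIncrement H (n + 1) (2 * k) ≤ M * dyadicIncrement H (n + 1) (2 * k + 1) := by
  have hmid : ((k : ℝ) / 2 ^ n + ((k + 1 : ℕ) : ℝ) / 2 ^ n) / 2 =
      ((2 * k + 1 : ℕ) : ℝ) / 2 ^ (n + 1) := by
    push_cast
    ring
  have hlt : (k : ℝ) / 2 ^ n < ((k + 1 : ℕ) : ℝ) / 2 ^ n := by
    gcongr
    exact k.lt_succ_self
  have hle : ((k + 1 : ℕ) : ℝ) / 2 ^ n ≤ 1 :=
    div_le_one_of_le₀ (by exact_mod_cast hk) (by positivity)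
  have hhalves := hqs.sub_midpoint_le_mul hM (by positivity) hlt hle (sub_pos.mp hpos)
  rw [hmid] at hhalves
  simpa only [dyadicIncrement, show 2 * k + 1 + 1 = 2 * (k + 1) by ring,
    two_mul_div_two_pow_succ] using hhalves

theorem IsQSOn.dyadicIncrement_mem_Icc (hqs : IsQSOn M H) (hM : 0 < M)
    (hH : H 0 < H 1) {n k : ℕ} (hk : k < 2 ^ n) :
    dyadicIncrement H n k ∈
      Icc ((1 / (M + 1)) ^ n * (H 1 - H 0)) ((M / (M + 1)) ^ n * (H 1 - H 0)) := by
  induction n generalizing k with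
  | zero =>
    obtain rfl : k = 0 := by simpa using hk
    simp [dyadicIncrement]
  | succ n ih =>
    have hM' : 0 < M + 1 := by positivity
    obtain ⟨j, hkj⟩ := k.even_or_odd'
    have hj : j < 2 ^ n := by rw [pow_succ] at hk; lia
    obtain ⟨hlower, hupper⟩ := ih hj
    have hpos : 0 < dyadicIncrement H n j :=
      (mul_pos (by positivity) (sub_pos.mpr hH)).trans_le hlower
    obtain ⟨hright, hleft⟩ := hqs.dyadicIncrement_succ_le_mul hM hj hpos
    have hshare : dyadicIncrement H (n + 1) k ∈
        Icc (1 / (M + 1) * dyadicIncrement H n j) (M / (M + 1) * dyadicIncrement H n j) := by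
      rw [← dyadicIncrement_succ_add]
      rcases hkj with rfl | rfl
      · exact mem_Icc_of_le_mul_of_le_mul hM' hright hleft
      · rw [add_comm (dyadicIncrement _ _ _)]
        exact mem_Icc_of_le_mul_of_le_mul hM' hleft hright
    rw [pow_succ', pow_succ', mul_assoc, mul_assoc]
    refine Icc_subset_Icc ?_ ?_ hshare <;> gcongr

theorem IsQSOn.abs_dyadicIncrement_sub_le (hqs : IsQSOn M H) (hM : 0 < M)
    (hH0 : H 0 = 0) (hH1 : H 1 = 1) {n k : ℕ} (hk : k < 2 ^ n) :
    |dyadicIncrement H n k - 1 / 2 ^ n| ≤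
      max ((M / (M + 1)) ^ n - 1 / 2 ^ n) (1 / 2 ^ n - (1 / (M + 1)) ^ n) := by
  have hmem := hqs.dyadicIncrement_mem_Icc hM (by simp [hH0, hH1]) hk
  rw [hH0, hH1, sub_zero, mul_one, mul_one] at hmem
  exact abs_sub_le_max_sub hmem.1 hmem.2 _

theorem stmt3_general (hM : 0 < M) (hH0 : H 0 = 0) (hH1 : H 1 = 1)
    (hqs : IsQSOn M H) (n : ℕ) :
    dyadicDeviation H (n + 1) ≤ dyadicDeviation H n +
      max ((M / (M + 1)) ^ (n + 1) - 1 / 2 ^ (n + 1))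
        (1 / 2 ^ (n + 1) - (1 / (M + 1)) ^ (n + 1)) :=
  dyadicDeviation_succ_le fun _ hk => hqs.abs_dyadicIncrement_sub_le hM hH0 hH1 hk

end

theorem stmt3 (M : ℝ) (hM : 1 ≤ M) (H : ℝ → ℝ)
    (hmono : StrictMonoOn H (Set.Icc (0:ℝ) 1))
    (hcont : ContinuousOn H (Set.Icc (0:ℝ) 1))
    (hsurj : Set.SurjOn H (Set.Icc (0:ℝ) 1) (Set.Icc (0:ℝ) 1))
    (hH0 : H 0 = 0) (hH1 : H 1 = 1)
    (hqs : IsQSOn M H)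
    (χ : ℕ → ℝ)
    (hχ : ∀ n : ℕ, 1 ≤ n →
      χ n = max ((M / (M + 1)) ^ n - 1 / 2 ^ n) (1 / 2 ^ n - (1 / (M + 1)) ^ n)) :
    ∀ n : ℕ, 2 ≤ n →
      (Finset.range (2 ^ n + 1)).sup'
          (Finset.nonempty_range_iff.mpr (Nat.succ_ne_zero _))
          (fun i => |H ((i : ℝ) / 2 ^ n) - (i : ℝ) / 2 ^ n|) ≤
        (Finset.range (2 ^ (n - 1) + 1)).sup'
            (Finset.nonempty_range_iff.mpr (Nat.succ_ne_zero _))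
            (fun i => |H ((i : ℝ) / 2 ^ (n - 1)) - (i : ℝ) / 2 ^ (n - 1)|) + χ n := by
  rintro (_ | n) hn
  · contradiction
  · rw [hχ _ n.succ_pos]
    exact stmt3_general (by linarith) hH0 hH1 hqs n
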